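/- The quotient space S = Σ/∼ is homeomorphic to the 2-sphere (the unit sphere in 3-dimensional Euclidean space). -/

import Mathlib

noncomputable section

/-- The unit square `Σ = [0,1] × [0,1] ⊆ ℝ²`. -/
def Sq : Set (ℝ × ℝ) := Set.Icc (0 : ℝ) 1 ×ˢ Set.Icc (0 : ℝ) 1

/-- The (discontinuous, non-injective) horseshoe-like map
`F(x,y) = (2x, y/2)` for `x ≤ 1/2` and `F(x,y) = (2−2x, 1−y/2)` for `x > 1/2`. -/
def F : ℝ × ℝ → ℝ × ℝ :=
  fun p => if p.1 ≤ 1 / 2 then (2 * p.1, p.2 / 2) else (2 - 2 * p.1, 1 - p.2 / 2)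

/-- The set `E` of fold-segment endpoints together with the bottom-left corner:
`E = {(0,0), (1,1)} ∪ {(0, 2^{−i}) : i ≥ 0} ∪ {(2^{−i}, 0) : i ≥ 0}`. -/
def Efold : Set (ℝ × ℝ) :=
  {((0 : ℝ), (0 : ℝ)), ((1 : ℝ), (1 : ℝ))} ∪
    {q | ∃ i : ℕ, q = ((0 : ℝ), (2 : ℝ) ^ (-(i : ℤ)))} ∪
    {q | ∃ i : ℕ, q = ((2 : ℝ) ^ (-(i : ℤ)), (0 : ℝ))}

/-- The generating relation for the identifications on `Σ`:
`(x,1) ∼ (1−x,1)` for `x ∈ [0,1]`; `(1,y) ∼ (1,1−y)` for `y ∈ [0,1]`;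
`(0,y) ∼ (0, 3·2^{−i} − y)` for `i ≥ 1`, `y ∈ [2^{−i}, 2^{−i+1}]`;
`(x,0) ∼ (3·2^{−i} − x, 0)` for `i ≥ 1`, `x ∈ [2^{−i}, 2^{−i+1}]`;
and `p ∼ p′` for all `p, p′ ∈ E`. -/
def baseRel (p p' : ℝ × ℝ) : Prop :=
  (∃ x ∈ Set.Icc (0 : ℝ) 1, p = (x, (1 : ℝ)) ∧ p' = (1 - x, (1 : ℝ))) ∨
  (∃ y ∈ Set.Icc (0 : ℝ) 1, p = ((1 : ℝ), y) ∧ p' = ((1 : ℝ), 1 - y)) ∨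
  (∃ i : ℕ, 1 ≤ i ∧ ∃ y ∈ Set.Icc ((2 : ℝ) ^ (-(i : ℤ))) ((2 : ℝ) ^ (-(i : ℤ) + 1)),
      p = ((0 : ℝ), y) ∧ p' = ((0 : ℝ), 3 * (2 : ℝ) ^ (-(i : ℤ)) - y)) ∨
  (∃ i : ℕ, 1 ≤ i ∧ ∃ x ∈ Set.Icc ((2 : ℝ) ^ (-(i : ℤ))) ((2 : ℝ) ^ (-(i : ℤ) + 1)),
      p = (x, (0 : ℝ)) ∧ p' = (3 * (2 : ℝ) ^ (-(i : ℤ)) - x, (0 : ℝ))) ∨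
  (p ∈ Efold ∧ p' ∈ Efold)

/-- The smallest equivalence relation containing `baseRel` (all points related by
`baseRel` lie in `Σ`, so its restriction to `Σ` is the smallest equivalence relation
on `Σ` containing the given identifications). -/
def hsRel : ℝ × ℝ → ℝ × ℝ → Prop := Relation.EqvGen baseRel

/-- The setoid on `Σ` given by restricting `hsRel`. -/
def hsSetoid : Setoid ↥Sq :=
  ⟨fun p q => hsRel p.val q.val,
   ⟨fun _ => Relation.EqvGen.refl _, fun h => Relation.EqvGen.symm _ _ h, fun h h' => Relation.EqvGen.trans _ _ _ h h'⟩⟩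

/-- The quotient sphere `S = Σ/∼`, with the quotient topology. -/
abbrev HS : Type := Quotient hsSetoid

/-- The quotient map `π : Σ → S`. -/
def hsPi (p : ↥Sq) : HS := Quotient.mk hsSetoid p

end

namespace HSProof

open Set Topology Filter

noncomputable section

/-- The set of boundary parameters of fold endpoints (extended by two rays). -/
def AA : Set ℝ :=
  Iic 0 ∪ Ici 4 ∪ {2} ∪ (insert 0 (range fun i : ℕ => (1 / 2 : ℝ) ^ i)) ∪
    (insert 4 (range fun i : ℕ => 4 - (1 / 2 : ℝ) ^ i))

lemma mem_AA {t : ℝ} : t ∈ AA ↔ t ≤ 0 ∨ 4 ≤ t ∨ t = 2 ∨ (∃ i : ℕ, t = (1 / 2 : ℝ) ^ i) ∨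
    (∃ i : ℕ, t = 4 - (1 / 2 : ℝ) ^ i) := by
  simp only [AA, mem_union, mem_Iic, mem_Ici, mem_singleton_iff, mem_insert_iff, mem_range]
  constructor
  · rintro ((((h | h) | h) | (h | ⟨i, h⟩)) | (h | ⟨i, h⟩))
    · exact Or.inl h
    · exact Or.inr (Or.inl h)
    · exact Or.inr (Or.inr (Or.inl h))
    · exact Or.inl h.le
    · exact Or.inr (Or.inr (Or.inr (Or.inl ⟨i, h.symm⟩)))
    · exact Or.inr (Or.inl h.ge)
    · exact Or.inr (Or.inr (Or.inr (Or.inr ⟨i, h.symm⟩)))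
  · rintro (h | h | h | ⟨i, h⟩ | ⟨i, h⟩)
    · simp [h]
    · simp [h]
    · simp [h]
    · exact Or.inl (Or.inr (Or.inr ⟨i, h.symm⟩))
    · exact Or.inr (Or.inr ⟨i, h.symm⟩)

lemma AA_closed : IsClosed AA := by
  have h0 : Tendsto (fun i : ℕ => (1 / 2 : ℝ) ^ i) atTop (𝓝 0) :=
    tendsto_pow_atTop_nhds_zero_of_lt_one (by norm_num) (by norm_num)
  have h4 : Tendsto (fun i : ℕ => 4 - (1 / 2 : ℝ) ^ i) atTop (𝓝 4) := by
    simpa using h0.const_sub 4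
  exact (((isClosed_Iic.union isClosed_Ici).union isClosed_singleton).union
    h0.isCompact_insert_range.isClosed).union h4.isCompact_insert_range.isClosed

lemma AA_ne : AA.Nonempty := ⟨0, mem_AA.2 (Or.inl le_rfl)⟩

/-- Consecutive points of `AA`. -/
def Cons (l r : ℝ) : Prop := l ∈ AA ∧ r ∈ AA ∧ l < r ∧ ∀ x, l < x → x < r → x ∉ AA

lemma Cons.unique {l r l' r' t : ℝ} (h : Cons l r) (h' : Cons l' r') (h1 : l < t) (h2 : t < r)
    (h1' : l' < t) (h2' : t < r') : l = l' ∧ r = r' := by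
  obtain ⟨a, b, c, d⟩ := h
  obtain ⟨a', b', c', d'⟩ := h'
  constructor
  · rcases lt_trichotomy l l' with hh | hh | hh
    · exact absurd a' (d _ hh (h1'.trans h2))
    · exact hh
    · exact absurd a (d' _ hh (h1.trans h2'))
  · rcases lt_trichotomy r r' with hh | hh | hh
    · exact absurd b (d' _ (h1'.trans h2) hh)
    · exact hh
    · exact absurd b' (d _ (h1.trans h2') hh)

lemma Cons.bounds {l r : ℝ} (h : Cons l r) : 0 ≤ l ∧ r ≤ 4 := by
  obtain ⟨a, b, c, d⟩ := h
  constructor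
  · by_contra hl
    push Not at hl
    by_cases hr : r < 0
    · exact d ((l + r) / 2) (by linarith) (by linarith) (mem_AA.2 (Or.inl (by linarith)))
    · exact d (l / 2) (by linarith) (by linarith) (mem_AA.2 (Or.inl (by linarith)))
  · by_contra hl
    push Not at hl
    by_cases hr : 4 < l
    · exact d ((l + r) / 2) (by linarith) (by linarith) (mem_AA.2 (Or.inr (Or.inl (by linarith))))
    · exact d ((4 + r) / 2) (by linarith) (by linarith)
        (mem_AA.2 (Or.inr (Or.inl (by linarith))))

lemma exists_cons {t : ℝ} (ht : t ∉ AA) : ∃ l r, Cons l r ∧ l < t ∧ t < r := by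
  have ht' := ht
  rw [mem_AA] at ht'
  push Not at ht'
  have hl : sSup (AA ∩ Iic t) ∈ AA ∩ Iic t :=
    (AA_closed.inter isClosed_Iic).csSup_mem ⟨0, mem_AA.2 (Or.inl le_rfl), ht'.1.le⟩
      ⟨t, fun x hx => hx.2⟩
  have hr : sInf (AA ∩ Ici t) ∈ AA ∩ Ici t :=
    (AA_closed.inter isClosed_Ici).csInf_mem
      ⟨4, mem_AA.2 (Or.inr (Or.inl le_rfl)), ht'.2.1.le⟩ ⟨t, fun x hx => hx.2⟩
  have h1 : sSup (AA ∩ Iic t) < t := lt_of_le_of_ne hl.2 (fun h => ht (h ▸ hl.1))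
  have h2 : t < sInf (AA ∩ Ici t) := lt_of_le_of_ne hr.2 (fun h => ht (h ▸ hr.1))
  refine ⟨_, _, ⟨hl.1, hr.1, h1.trans h2, fun x hx hx' hA => ?_⟩, h1, h2⟩
  rcases le_total x t with h | h
  · exact absurd (le_csSup ⟨t, fun x hx => hx.2⟩ (show x ∈ AA ∩ Iic t from ⟨hA, h⟩))
      (not_le.2 hx)
  · exact absurd (csInf_le ⟨t, fun x hx => hx.2⟩ (show x ∈ AA ∩ Ici t from ⟨hA, h⟩))
      (not_le.2 hx')

open Classical in
/-- Midpoint of the fold interval. -/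
def mid (t : ℝ) : ℝ :=
  if h : ∃ c : ℝ, ∃ l r, Cons l r ∧ l < t ∧ t < r ∧ c = (l + r) / 2 then h.choose else t

lemma mid_eq {l r t : ℝ} (h : Cons l r) (h1 : l < t) (h2 : t < r) : mid t = (l + r) / 2 := by
  have hex : ∃ c : ℝ, ∃ l r, Cons l r ∧ l < t ∧ t < r ∧ c = (l + r) / 2 :=
    ⟨_, l, r, h, h1, h2, rfl⟩
  rw [mid, dif_pos hex]
  obtain ⟨l', r', h', h1', h2', e⟩ := hex.choose_spec
  obtain ⟨e1, e2⟩ := h.unique h' h1 h2 h1' h2'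
  rw [e, e1, e2]

/-- Scaled distance to `AA`. -/
def dd (t : ℝ) : ℝ := Metric.infDist t AA / 4

lemma dd_cont : Continuous dd := (Metric.continuous_infDist_pt AA).div_const 4

lemma dd_nonneg (t : ℝ) : 0 ≤ dd t := div_nonneg Metric.infDist_nonneg (by norm_num)

lemma dd_zero {t : ℝ} (h : t ∈ AA) : dd t = 0 := by
  simp [dd, (AA_closed.mem_iff_infDist_zero AA_ne).1 h]

lemma dd_pos {t : ℝ} (h : t ∉ AA) : 0 < dd t :=
  div_pos ((AA_closed.notMem_iff_infDist_pos AA_ne).1 h) (by norm_num)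

lemma dd_eq {l r t : ℝ} (h : Cons l r) (h1 : l ≤ t) (h2 : t ≤ r) :
    dd t = ((r - l) / 2 - |t - (l + r) / 2|) / 4 := by
  rw [dd]
  congr 1
  apply le_antisymm
  · have a := Metric.infDist_le_dist_of_mem (x := t) h.1
    have b := Metric.infDist_le_dist_of_mem (x := t) h.2.1
    rw [Real.dist_eq, abs_of_nonneg (by linarith)] at a
    rw [Real.dist_eq, abs_of_nonpos (by linarith)] at b
    rcases abs_cases (t - (l + r) / 2) with ⟨e, _⟩ | ⟨e, _⟩ <;> rw [e] <;> linarith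
  · rw [Metric.le_infDist AA_ne]
    intro y hy
    rw [Real.dist_eq]
    have : y ≤ l ∨ r ≤ y := by
      by_contra hc
      push Not at hc
      exact h.2.2.2 y hc.1 hc.2 hy
    rcases this with hh | hh
    · rw [abs_of_nonneg (show 0 ≤ t - y by linarith)]
      rcases abs_cases (t - (l + r) / 2) with ⟨e, _⟩ | ⟨e, _⟩ <;> rw [e] <;> linarith
    · rw [abs_of_nonpos (show t - y ≤ 0 by linarith)]
      rcases abs_cases (t - (l + r) / 2) with ⟨e, _⟩ | ⟨e, _⟩ <;> rw [e] <;> linarith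

lemma dd_le (t : ℝ) : dd t ≤ 1 / 2 := by
  by_cases h : t ∈ AA
  · rw [dd_zero h]; norm_num
  · obtain ⟨l, r, hc, h1, h2⟩ := exists_cons h
    rw [dd_eq hc h1.le h2.le]
    have := hc.bounds
    have := abs_nonneg (t - (l + r) / 2)
    linarith

/-- The displacement function. -/
def ee (t : ℝ) : ℝ := dd t * (t - mid t)

lemma ee_zero {t : ℝ} (h : t ∈ AA) : ee t = 0 := by simp [ee, dd_zero h]

lemma ee_bound (t : ℝ) : |ee t| ≤ dd t * 4 := by
  by_cases h : t ∈ AA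
  · rw [ee_zero h, dd_zero h]; norm_num
  · obtain ⟨l, r, hc, h1, h2⟩ := exists_cons h
    rw [ee, mid_eq hc h1 h2, abs_mul, abs_of_nonneg (dd_nonneg t)]
    apply mul_le_mul_of_nonneg_left _ (dd_nonneg t)
    have := hc.bounds
    rw [abs_le]
    constructor <;> linarith

lemma ee_cont : Continuous ee := by
  rw [continuous_iff_continuousAt]
  intro t
  by_cases h : t ∈ AA
  · rw [ContinuousAt, ee_zero h]
    have : Tendsto (fun t => dd t * 4) (𝓝 t) (𝓝 0) := by
      have := (dd_cont.mul_const 4).tendsto t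
      simpa [dd_zero h] using this
    exact squeeze_zero_norm (fun t => by rw [Real.norm_eq_abs]; exact ee_bound t) this
  · obtain ⟨l, r, hc, h1, h2⟩ := exists_cons h
    have : ee =ᶠ[𝓝 t] fun x => dd x * (x - (l + r) / 2) := by
      filter_upwards [Ioo_mem_nhds h1 h2] with x hx
      rw [ee, mid_eq hc hx.1 hx.2]
    rw [continuousAt_congr this]
    exact (dd_cont.mul (by fun_prop)).continuousAt

/-- New boundary parameter. -/
def XX (t ρ : ℝ) : ℝ := t - ee t / (1 - ρ + dd t)

/-- New radius. -/
def RR (t ρ : ℝ) : ℝ := ρ * (1 - dd t)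

lemma XX_of_mem {t : ℝ} (h : t ∈ AA) (ρ : ℝ) : XX t ρ = t := by simp [XX, ee_zero h]

lemma RR_of_mem {t : ℝ} (h : t ∈ AA) (ρ : ℝ) : RR t ρ = ρ := by simp [RR, dd_zero h]

lemma XX_eq {l r t ρ : ℝ} (h : Cons l r) (h1 : l < t) (h2 : t < r) (hρ : ρ ≤ 1) :
    XX t ρ = (l + r) / 2 + (t - (l + r) / 2) * ((1 - ρ) / (1 - ρ + dd t)) := by
  have := dd_pos (h.2.2.2 t h1 h2)
  have h3 : 1 - ρ + dd t ≠ 0 := by linarith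
  rw [XX, ee, mid_eq h h1 h2]
  field_simp
  ring

lemma XX_mem {l r t ρ : ℝ} (h : Cons l r) (h1 : l < t) (h2 : t < r) (hρ : ρ ≤ 1) :
    l < XX t ρ ∧ XX t ρ < r := by
  rw [XX_eq h h1 h2 hρ]
  have := dd_pos (h.2.2.2 t h1 h2)
  have h3 : 0 < 1 - ρ + dd t := by linarith
  have h4 : (1 - ρ) / (1 - ρ + dd t) ≤ 1 := by rw [div_le_one h3]; linarith
  have h5 : 0 ≤ (1 - ρ) / (1 - ρ + dd t) := div_nonneg (by linarith) h3.le
  have h6 : |(t - (l + r) / 2) * ((1 - ρ) / (1 - ρ + dd t))| ≤ |t - (l + r) / 2| := by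
    rw [abs_mul, abs_of_nonneg h5]
    exact mul_le_of_le_one_right (abs_nonneg _) h4
  have h7 : |t - (l + r) / 2| < (r - l) / 2 := by
    rw [abs_lt]; constructor <;> linarith
  have h8 := abs_lt.1 (h6.trans_lt h7)
  constructor <;> linarith [h8.1, h8.2]

lemma XX_mem_AA {t ρ : ℝ} (hρ : ρ ≤ 1) : XX t ρ ∈ AA ↔ t ∈ AA := by
  constructor
  · intro h
    by_contra ht
    obtain ⟨l, r, hc, h1, h2⟩ := exists_cons ht
    have := XX_mem hc h1 h2 hρ
    exact hc.2.2.2 _ this.1 this.2 h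
  · intro h; rwa [XX_of_mem h]

lemma XX_Icc {t ρ : ℝ} (ht : t ∈ Icc (0 : ℝ) 4) (hρ : ρ ≤ 1) : XX t ρ ∈ Icc (0 : ℝ) 4 := by
  by_cases h : t ∈ AA
  · rwa [XX_of_mem h]
  · obtain ⟨l, r, hc, h1, h2⟩ := exists_cons h
    have := XX_mem hc h1 h2 hρ
    have := hc.bounds
    constructor <;> linarith

/-- Injectivity up to fold. -/
lemma XR_inj {t ρ t' ρ' : ℝ} (hρ0 : 0 < ρ) (hρ : ρ ≤ 1) (hρ0' : 0 < ρ') (hρ' : ρ' ≤ 1)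
    (hX : XX t ρ = XX t' ρ') (hR : RR t ρ = RR t' ρ') :
    (t = t' ∧ ρ = ρ') ∨ (ρ = 1 ∧ ρ' = 1 ∧ ∃ l r, Cons l r ∧ l < t ∧ t < r ∧ t' = l + r - t) := by
  by_cases h : t ∈ AA
  · have h' : t' ∈ AA := by rwa [← XX_mem_AA hρ', ← hX, XX_mem_AA hρ]
    rw [XX_of_mem h, XX_of_mem h'] at hX
    rw [RR_of_mem h, RR_of_mem h'] at hR
    exact Or.inl ⟨hX, hR⟩
  have h' : t' ∉ AA := by rwa [← XX_mem_AA hρ', ← hX, XX_mem_AA hρ]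
  obtain ⟨l, r, hc, h1, h2⟩ := exists_cons h
  obtain ⟨l', r', hc', h1', h2'⟩ := exists_cons h'
  have m1 := XX_mem hc h1 h2 hρ
  have m2 := XX_mem hc' h1' h2' hρ'
  rw [← hX] at m2
  obtain ⟨e1, e2⟩ := hc.unique hc' m1.1 m1.2 m2.1 m2.2
  subst e1 e2
  rw [XX_eq hc h1 h2 hρ, XX_eq hc h1' h2' hρ'] at hX
  have hX' := add_left_cancel hX
  have d1 := dd_pos h
  have d2 := dd_pos h'
  have e1 := dd_eq hc h1.le h2.le
  have e2 := dd_eq hc h1'.le h2'.le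
  have f1 := dd_le t
  have f2 := dd_le t'
  rw [RR, RR] at hR
  have key : ∀ s d ρ s' d' ρ' : ℝ, 0 < d → d < d' → d' ≤ 1 / 2 → 0 < ρ → ρ' ≤ 1 → 0 < ρ' →
      |s'| < |s| → s * ((1 - ρ) / (1 - ρ + d)) = s' * ((1 - ρ') / (1 - ρ' + d')) →
      ρ * (1 - d) = ρ' * (1 - d') → False := by
    intro s d ρ s' d' ρ' hd hdd hd' hρ hρ1 hρ0 hs hX hR
    have g1 : ρ < ρ' := by
      by_contra hh
      push Not at hh
      nlinarith
    have g2 : (1 - ρ') / (1 - ρ' + d') < (1 - ρ) / (1 - ρ + d) := by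
      rw [div_lt_div_iff₀ (by linarith) (by linarith)]
      nlinarith
    have g3 : 0 ≤ (1 - ρ') / (1 - ρ' + d') := div_nonneg (by linarith) (by linarith)
    have := congrArg abs hX
    rw [abs_mul, abs_mul, abs_of_nonneg g3, abs_of_nonneg (g3.trans g2.le)] at this
    have := abs_nonneg s'
    nlinarith
  rcases lt_trichotomy (dd t) (dd t') with hd | hd | hd
  · exact (key _ _ _ _ _ _ d1 hd f2 hρ0 hρ' hρ0' (by linarith) hX' hR).elim
  · rw [hd] at hR
    have hρe : ρ = ρ' := mul_right_cancel₀ (by linarith) hR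
    subst hρe
    have hs : |t - (l + r) / 2| = |t' - (l + r) / 2| := by linarith
    rcases abs_eq_abs.1 hs with hh | hh
    · exact Or.inl ⟨by linarith, rfl⟩
    · by_cases h1ρ : ρ = 1
      · exact Or.inr ⟨h1ρ, h1ρ, l, r, hc, h1, h2, by linarith⟩
      · left
        refine ⟨?_, rfl⟩
        have hp : 0 < 1 - ρ := by
          have := lt_of_le_of_ne hρ h1ρ
          linarith
        have hq : 0 < (1 - ρ) / (1 - ρ + dd t') := div_pos hp (by linarith)
        rw [hd] at hX'
        have := mul_right_cancel₀ hq.ne' hX'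
        linarith
  · exact (key _ _ _ _ _ _ d2 hd f1 hρ0' hρ hρ0 (by linarith) hX'.symm hR.symm).elim

lemma surj_aux {ℓ R U : ℝ} (hℓ : 0 < ℓ) (hℓ2 : ℓ ≤ 2) (hR : 0 < R) (hR1 : R < 1) (hU : 0 ≤ U)
    (hUℓ : U < ℓ) : ∃ s ρ : ℝ, 0 ≤ s ∧ s < ℓ ∧ 0 < ρ ∧ ρ ≤ 1 ∧ ρ * (1 - (ℓ - s) / 4) = R ∧
      s * ((1 - ρ) / (1 - ρ + (ℓ - s) / 4)) = U := by
  set s0 := max 0 (ℓ - 4 * (1 - R)) with hs0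
  have hs0ℓ : s0 ≤ ℓ := max_le hℓ.le (by linarith)
  have a0 : 0 ≤ s0 := le_max_left _ _
  have a1 : ℓ - 4 * (1 - R) ≤ s0 := le_max_right _ _
  have hD : ∀ s ∈ Icc s0 ℓ, 0 < 1 - (ℓ - s) / 4 ∧ R ≤ 1 - (ℓ - s) / 4 := by
    intro s hs
    have := hs.1; have := hs.2
    constructor <;> linarith
  have hy : ∀ s ∈ Icc s0 ℓ, 0 ≤ 1 - R / (1 - (ℓ - s) / 4) := by
    intro s hs
    have := hD s hs
    have := (div_le_one this.1).2 this.2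
    linarith
  have hyd : ∀ s ∈ Icc s0 ℓ, 0 < 1 - R / (1 - (ℓ - s) / 4) + (ℓ - s) / 4 := by
    intro s hs
    rcases hs.2.lt_or_eq with h | h
    · have := hy s hs
      linarith
    · rw [h]; simp; linarith
  let f : ℝ → ℝ := fun s =>
    s * ((1 - R / (1 - (ℓ - s) / 4)) / (1 - R / (1 - (ℓ - s) / 4) + (ℓ - s) / 4))
  have hf : ContinuousOn f (Icc s0 ℓ) := by
    have hc1 : ContinuousOn (fun s : ℝ => 1 - R / (1 - (ℓ - s) / 4)) (Icc s0 ℓ) :=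
      continuousOn_const.sub (continuousOn_const.div (by fun_prop) (fun s hs => (hD s hs).1.ne'))
    exact continuousOn_id.mul (hc1.div (hc1.add (by fun_prop)) (fun s hs => (hyd s hs).ne'))
  have f1 : f ℓ = ℓ := by
    have : (1 - R) ≠ 0 := by linarith
    simp [f, this]
  have f0 : f s0 = 0 := by
    rcases max_cases 0 (ℓ - 4 * (1 - R)) with ⟨h, _⟩ | ⟨h, _⟩
    · have : s0 = 0 := by rw [hs0, h]
      simp [f, this]
    · have : s0 = ℓ - 4 * (1 - R) := by rw [hs0, h]
      have h2 : 1 - (ℓ - s0) / 4 = R := by rw [this]; ring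
      simp only [f]
      rw [h2, div_self hR.ne']
      simp
  have := intermediate_value_Icc hs0ℓ hf
  rw [f0, f1] at this
  obtain ⟨s, hs, hfs⟩ := this ⟨hU, hUℓ.le⟩
  refine ⟨s, R / (1 - (ℓ - s) / 4), a0.trans hs.1, ?_, div_pos hR (hD s hs).1, ?_, ?_, hfs⟩
  · rcases hs.2.lt_or_eq with h | h
    · exact h
    · rw [h, f1] at hfs; linarith
  · linarith [hy s hs]
  · exact div_mul_cancel₀ _ (hD s hs).1.ne'

lemma surj_aux2 {ℓ R U : ℝ} (hℓ : 0 < ℓ) (hℓ2 : ℓ ≤ 2) (hR : 0 < R) (hR1 : R < 1)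
    (hUℓ : |U| < ℓ) : ∃ s ρ : ℝ, |s| < ℓ ∧ 0 < ρ ∧ ρ ≤ 1 ∧ ρ * (1 - (ℓ - |s|) / 4) = R ∧
      s * ((1 - ρ) / (1 - ρ + (ℓ - |s|) / 4)) = U := by
  obtain ⟨s, ρ, h1, h2, h3, h4, h5, h6⟩ := surj_aux hℓ hℓ2 hR hR1 (abs_nonneg U) hUℓ
  rcases abs_cases U with ⟨e, _⟩ | ⟨e, _⟩
  · refine ⟨s, ρ, ?_⟩
    rw [abs_of_nonneg h1]
    exact ⟨h2, h3, h4, h5, by rw [h6, e]⟩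
  · refine ⟨-s, ρ, ?_⟩
    rw [abs_neg, abs_of_nonneg h1]
    exact ⟨h2, h3, h4, h5, by rw [neg_mul, h6, e]; ring⟩

lemma XR_surj {X R : ℝ} (hX : X ∈ Icc (0 : ℝ) 4) (hR : 0 < R) (hR1 : R < 1) :
    ∃ t ρ : ℝ, t ∈ Icc (0 : ℝ) 4 ∧ ρ ∈ Icc (0 : ℝ) 1 ∧ ¬ (ρ = 1 ∧ t ∈ AA) ∧
      XX t ρ = X ∧ RR t ρ = R := by
  by_cases h : X ∈ AA
  · exact ⟨X, R, hX, ⟨hR.le, hR1.le⟩, fun hh => hR1.ne hh.1, XX_of_mem h _, RR_of_mem h _⟩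
  · obtain ⟨l, r, hc, h1, h2⟩ := exists_cons h
    have hb := hc.bounds
    have hlr := hc.2.2.1
    obtain ⟨s, ρ, g1, g2, g3, g4, g5⟩ := surj_aux2 (ℓ := (r - l) / 2) (U := X - (l + r) / 2)
      (by linarith) (by linarith) hR hR1 (by rw [abs_lt]; constructor <;> linarith)
    have g1' := abs_lt.1 g1
    have k1 : l < (l + r) / 2 + s := by linarith [g1'.1]
    have k2 : (l + r) / 2 + s < r := by linarith [g1'.2]
    have hd : dd ((l + r) / 2 + s) = ((r - l) / 2 - |s|) / 4 := by
      rw [dd_eq hc k1.le k2.le, add_sub_cancel_left]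
    refine ⟨(l + r) / 2 + s, ρ, ⟨by linarith, by linarith⟩, ⟨g2.le, g3⟩,
      fun hh => hc.2.2.2 _ k1 k2 hh.2, ?_, ?_⟩
    · rw [XX_eq hc k1 k2 g3, hd, add_sub_cancel_left, g5]; ring
    · rw [RR, hd, g4]

/-- Boundary loop of the square, centred at the origin. -/
def gc (t : ℝ) : ℝ × ℝ :=
  (max 0 (min 1 (min t (3 - t))) - 1 / 2, max 0 (min 1 (min (t - 1) (4 - t))) - 1 / 2)

lemma gc_cont : Continuous gc := by unfold gc; fun_prop

lemma gc_bot {t : ℝ} (h0 : 0 ≤ t) (h1 : t ≤ 1) : gc t = (t - 1 / 2, -(1 / 2)) := by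
  simp only [gc]
  rw [min_eq_left (show t ≤ 3 - t by linarith), min_eq_right h1, max_eq_right h0,
    min_eq_left (show t - 1 ≤ 4 - t by linarith), min_eq_right (show t - 1 ≤ 1 by linarith),
    max_eq_left (show t - 1 ≤ 0 by linarith), zero_sub]

lemma gc_right {t : ℝ} (h0 : 1 ≤ t) (h1 : t ≤ 2) : gc t = (1 / 2, t - 3 / 2) := by
  simp only [gc]
  rw [min_eq_left (show 1 ≤ min t (3 - t) from le_min h0 (by linarith)),
    max_eq_right (show (0 : ℝ) ≤ 1 by norm_num),
    min_eq_left (show t - 1 ≤ 4 - t by linarith), min_eq_right (show t - 1 ≤ 1 by linarith),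
    max_eq_right (show 0 ≤ t - 1 by linarith)]
  ext <;> simp <;> ring

lemma gc_top {t : ℝ} (h0 : 2 ≤ t) (h1 : t ≤ 3) : gc t = (5 / 2 - t, 1 / 2) := by
  simp only [gc]
  rw [min_eq_left (show 1 ≤ min (t - 1) (4 - t) from le_min (by linarith) (by linarith)),
    max_eq_right (show (0 : ℝ) ≤ 1 by norm_num),
    min_eq_right (show 3 - t ≤ t by linarith), min_eq_right (show 3 - t ≤ 1 by linarith),
    max_eq_right (show 0 ≤ 3 - t by linarith)]
  ext <;> simp <;> ring

lemma gc_left {t : ℝ} (h0 : 3 ≤ t) (h1 : t ≤ 4) : gc t = (-(1 / 2), 7 / 2 - t) := by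
  simp only [gc]
  rw [min_eq_right (show 3 - t ≤ t by linarith), min_eq_right (show 3 - t ≤ 1 by linarith),
    max_eq_left (show 3 - t ≤ 0 by linarith), min_eq_right (show 4 - t ≤ t - 1 by linarith),
    min_eq_right (show 4 - t ≤ 1 by linarith), max_eq_right (show 0 ≤ 4 - t by linarith)]
  ext <;> simp
  ring

lemma four_cases {t : ℝ} (h : t ∈ Icc (0 : ℝ) 4) :
    (0 ≤ t ∧ t ≤ 1) ∨ (1 ≤ t ∧ t ≤ 2) ∨ (2 ≤ t ∧ t ≤ 3) ∨ (3 ≤ t ∧ t ≤ 4) := by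
  obtain ⟨a, b⟩ := h
  rcases le_total t 1 with h1 | h1
  · exact Or.inl ⟨a, h1⟩
  rcases le_total t 2 with h2 | h2
  · exact Or.inr (Or.inl ⟨h1, h2⟩)
  rcases le_total t 3 with h3 | h3
  · exact Or.inr (Or.inr (Or.inl ⟨h2, h3⟩))
  · exact Or.inr (Or.inr (Or.inr ⟨h3, b⟩))

lemma norm_gc {t : ℝ} (h : t ∈ Icc (0 : ℝ) 4) : ‖gc t‖ = 1 / 2 := by
  have e : ‖(1 / 2 : ℝ)‖ = 1 / 2 := by norm_num
  rcases four_cases h with ⟨a, b⟩ | ⟨a, b⟩ | ⟨a, b⟩ | ⟨a, b⟩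
  · rw [gc_bot a b, Prod.norm_mk, norm_neg, e]
    exact max_eq_right (abs_le.2 ⟨by linarith, by linarith⟩)
  · rw [gc_right a b, Prod.norm_mk, e]
    exact max_eq_left (abs_le.2 ⟨by linarith, by linarith⟩)
  · rw [gc_top a b, Prod.norm_mk, e]
    exact max_eq_right (abs_le.2 ⟨by linarith, by linarith⟩)
  · rw [gc_left a b, Prod.norm_mk, norm_neg, e]
    exact max_eq_left (abs_le.2 ⟨by linarith, by linarith⟩)

lemma gc_inj {t t' : ℝ} (h : t ∈ Icc (0 : ℝ) 4) (h' : t' ∈ Icc (0 : ℝ) 4) (e : gc t = gc t') :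
    t = t' ∨ (t = 0 ∧ t' = 4) ∨ (t = 4 ∧ t' = 0) := by
  rcases four_cases h with ⟨a, b⟩ | ⟨a, b⟩ | ⟨a, b⟩ | ⟨a, b⟩ <;>
  rcases four_cases h' with ⟨a', b'⟩ | ⟨a', b'⟩ | ⟨a', b'⟩ | ⟨a', b'⟩ <;>
  (first | rw [gc_bot a b] at e | rw [gc_right a b] at e | rw [gc_top a b] at e |
    rw [gc_left a b] at e) <;>
  (first | rw [gc_bot a' b'] at e | rw [gc_right a' b'] at e | rw [gc_top a' b'] at e |
    rw [gc_left a' b'] at e) <;>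
  rw [Prod.mk.injEq] at e <;> obtain ⟨e1, e2⟩ := e <;>
  first
  | (left; linarith)
  | (right; left; constructor <;> linarith)
  | (right; right; constructor <;> linarith)

lemma gc_surj {v : ℝ × ℝ} (h : ‖v‖ = 1 / 2) : ∃ t ∈ Icc (0 : ℝ) 4, gc t = v := by
  obtain ⟨x, y⟩ := v
  rw [Prod.norm_mk, Real.norm_eq_abs, Real.norm_eq_abs] at h
  have hx := abs_le.1 ((le_max_left |x| |y|).trans h.le)
  have hy := abs_le.1 ((le_max_right |x| |y|).trans h.le)
  have : x = 1 / 2 ∨ x = -(1 / 2) ∨ y = 1 / 2 ∨ y = -(1 / 2) := by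
    rcases max_choice |x| |y| with hh | hh <;> rw [hh] at h
    · rcases (abs_eq (by norm_num)).1 h with k | k
      · exact Or.inl k
      · exact Or.inr (Or.inl k)
    · rcases (abs_eq (by norm_num)).1 h with k | k
      · exact Or.inr (Or.inr (Or.inl k))
      · exact Or.inr (Or.inr (Or.inr k))
  rcases this with k | k | k | k
  · refine ⟨y + 3 / 2, ⟨by linarith, by linarith⟩, ?_⟩
    rw [gc_right (by linarith) (by linarith), k]; simp
  · refine ⟨7 / 2 - y, ⟨by linarith, by linarith⟩, ?_⟩
    rw [gc_left (by linarith) (by linarith), k]; simp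
  · refine ⟨5 / 2 - x, ⟨by linarith, by linarith⟩, ?_⟩
    rw [gc_top (by linarith) (by linarith), k]; simp
  · refine ⟨x + 1 / 2, ⟨by linarith, by linarith⟩, ?_⟩
    rw [gc_bot (by linarith) (by linarith), k]; simp

/-- The polar parametrisation of the square. -/
def pt (q : ℝ × ℝ) : ℝ × ℝ := ((1 / 2 : ℝ), (1 / 2 : ℝ)) + q.2 • gc q.1

lemma pt_cont : Continuous pt := by
  unfold pt
  exact continuous_const.add (continuous_snd.smul (gc_cont.comp continuous_fst))

/-- Polar uniqueness. -/
lemma polar_inj {t t' c c' : ℝ} (ht : t ∈ Icc (0 : ℝ) 4) (ht' : t' ∈ Icc (0 : ℝ) 4) (hc : 0 ≤ c)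
    (hc' : 0 ≤ c') (e : c • gc t = c' • gc t') :
    c = c' ∧ (c = 0 ∨ t = t' ∨ (t = 0 ∧ t' = 4) ∨ (t = 4 ∧ t' = 0)) := by
  have hn := congrArg norm e
  rw [norm_smul, norm_smul, norm_gc ht, norm_gc ht', Real.norm_of_nonneg hc,
    Real.norm_of_nonneg hc'] at hn
  have hcc : c = c' := by linarith
  subst hcc
  refine ⟨rfl, ?_⟩
  by_cases h0 : c = 0
  · exact Or.inl h0
  · exact Or.inr (gc_inj ht ht' (smul_right_injective _ h0 e))

lemma polar_surj (v : ℝ × ℝ) : ∃ t ∈ Icc (0 : ℝ) 4, v = (2 * ‖v‖) • gc t := by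
  by_cases h : v = 0
  · exact ⟨0, ⟨le_rfl, by norm_num⟩, by simp [h]⟩
  · have hv : 0 < ‖v‖ := norm_pos_iff.2 h
    obtain ⟨t, ht, e⟩ := gc_surj (v := (2 * ‖v‖)⁻¹ • v) (by
      rw [norm_smul, Real.norm_of_nonneg (by positivity)]; field_simp)
    refine ⟨t, ht, ?_⟩
    rw [e, smul_smul, mul_inv_cancel₀ (by positivity), one_smul]

/-- The parameter rectangle. -/
def KK : Set (ℝ × ℝ) := Icc (0 : ℝ) 4 ×ˢ Icc (0 : ℝ) 1

lemma pt_mem {q : ℝ × ℝ} (hq : q ∈ KK) : pt q ∈ Sq := by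
  have h1 : ‖q.2 • gc q.1‖ ≤ 1 / 2 := by
    rw [norm_smul, norm_gc hq.1, Real.norm_of_nonneg hq.2.1]
    have := hq.2.2
    linarith
  have hx := abs_le.1 ((norm_fst_le _).trans h1)
  have hy := abs_le.1 ((norm_snd_le _).trans h1)
  simp only [pt, Sq, mem_prod, mem_Icc, Prod.fst_add, Prod.snd_add]
  refine ⟨⟨?_, ?_⟩, ?_, ?_⟩ <;> linarith [hx.1, hx.2, hy.1, hy.2]

lemma pt_surj {p : ℝ × ℝ} (hp : p ∈ Sq) : ∃ q ∈ KK, pt q = p := by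
  obtain ⟨t, ht, e⟩ := polar_surj (p - ((1 / 2 : ℝ), (1 / 2 : ℝ)))
  have hn : ‖p - ((1 / 2 : ℝ), (1 / 2 : ℝ))‖ ≤ 1 / 2 := by
    obtain ⟨⟨a, b⟩, c, d⟩ := hp
    rw [Prod.norm_def]
    apply max_le <;> rw [Real.norm_eq_abs, abs_le] <;> simp <;> constructor <;> linarith
  refine ⟨(t, 2 * ‖p - ((1 / 2 : ℝ), (1 / 2 : ℝ))‖), ⟨ht, by positivity, by simp only; linarith⟩, ?_⟩
  rw [pt, ← e]
  abel

lemma RR_nonneg {t ρ : ℝ} (h : 0 ≤ ρ) : 0 ≤ RR t ρ :=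
  mul_nonneg h (by linarith [dd_le t])

lemma RR_le {t ρ : ℝ} (h : 0 ≤ ρ) (h1 : ρ ≤ 1) : RR t ρ ≤ 1 := by
  have := dd_nonneg t
  rw [RR]; nlinarith

lemma RR_lt {t ρ : ℝ} (h : 0 ≤ ρ) (h1 : ρ ≤ 1) (hn : ¬ (ρ = 1 ∧ t ∈ AA)) : RR t ρ < 1 := by
  by_cases ht : t ∈ AA
  · rw [RR_of_mem ht]
    exact lt_of_le_of_ne h1 (fun e => hn ⟨e, ht⟩)
  · have := dd_pos ht
    have := dd_le t
    rw [RR]; nlinarith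

/-- The finite part of the map. -/
def fin (q : ℝ × ℝ) : ℝ × ℝ := (RR q.1 q.2 / (1 - RR q.1 q.2)) • gc (XX q.1 q.2)

open Classical in
/-- The map from the parameter rectangle to the one-point compactification of the plane. -/
def Phi (q : ℝ × ℝ) : OnePoint (ℝ × ℝ) :=
  if q.2 = 1 ∧ q.1 ∈ AA then OnePoint.infty else ((fin q : ℝ × ℝ) : OnePoint (ℝ × ℝ))

lemma RR_cont : Continuous fun q : ℝ × ℝ => RR q.1 q.2 :=
  continuous_snd.mul (continuous_const.sub (dd_cont.comp continuous_fst))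

lemma Phi_cont : ContinuousOn Phi KK := by
  intro q hq
  by_cases h : q.2 = 1 ∧ q.1 ∈ AA
  · have hPhi : Phi q = OnePoint.infty := if_pos h
    rw [ContinuousWithinAt, hPhi, Tendsto, OnePoint.le_nhds_infty]
    intro s _ hs
    obtain ⟨C, hC⟩ := hs.isBounded.exists_norm_le
    have hRq : RR q.1 q.2 = 1 := by rw [RR_of_mem h.2, h.1]
    have hcont : Continuous fun q : ℝ × ℝ => RR q.1 q.2 - 2 * C * (1 - RR q.1 q.2) :=
      RR_cont.sub (continuous_const.mul (continuous_const.sub RR_cont))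
    have hev : ∀ᶠ q' in 𝓝[KK] q, 0 < RR q'.1 q'.2 - 2 * C * (1 - RR q'.1 q'.2) := by
      apply mem_nhdsWithin_of_mem_nhds
      apply hcont.continuousAt.eventually_const_lt
      simp [hRq]
    rw [mem_map]
    filter_upwards [hev, self_mem_nhdsWithin] with q' h1 h2
    rw [mem_preimage]
    by_cases h' : q'.2 = 1 ∧ q'.1 ∈ AA
    · right; exact if_pos h'
    · left
      refine ⟨fin q', ?_, (if_neg h').symm⟩
      intro hmem
      have hb := hC _ hmem
      have hlt := RR_lt h2.2.1 h2.2.2 h'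
      rw [fin, norm_smul, norm_gc (XX_Icc h2.1 h2.2.2), Real.norm_of_nonneg
        (div_nonneg (RR_nonneg h2.2.1) (by linarith)), div_mul_eq_mul_div,
        div_le_iff₀ (by linarith)] at hb
      linarith
  · have hopen : IsOpen {q : ℝ × ℝ | ¬ (q.2 = 1 ∧ q.1 ∈ AA)} := by
      have : IsClosed {q : ℝ × ℝ | q.2 = 1 ∧ q.1 ∈ AA} :=
        (isClosed_eq continuous_snd continuous_const).inter (AA_closed.preimage continuous_fst)
      exact this.isOpen_compl
    have heq : Phi =ᶠ[𝓝 q] fun q => ((fin q : ℝ × ℝ) : OnePoint (ℝ × ℝ)) := by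
      filter_upwards [hopen.mem_nhds h] with q' h'
      exact if_neg h'
    apply ContinuousAt.continuousWithinAt
    rw [continuousAt_congr heq]
    apply OnePoint.continuous_coe.continuousAt.comp
    have hlt := RR_lt hq.2.1 hq.2.2 h
    have hden : 1 - q.2 + dd q.1 ≠ 0 := by
      have h1 := hq.2.2
      by_cases hA : q.1 ∈ AA
      · rw [dd_zero hA]
        intro e
        exact h ⟨by linarith, hA⟩
      · have := dd_pos hA
        linarith
    unfold fin XX
    apply ContinuousAt.fun_smul
    · exact RR_cont.continuousAt.div (continuous_const.sub RR_cont).continuousAt (by linarith)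
    · apply gc_cont.continuousAt.comp
      exact continuousAt_fst.sub ((ee_cont.comp continuous_fst).continuousAt.div
        ((continuous_const.sub continuous_snd).add (dd_cont.comp continuous_fst)).continuousAt
        hden)

lemma Phi_surj (z : OnePoint (ℝ × ℝ)) : ∃ q ∈ KK, Phi q = z := by
  induction z using OnePoint.rec with
  | infty =>
    exact ⟨(0, 1), ⟨⟨le_rfl, by norm_num⟩, by norm_num, le_rfl⟩,
      if_pos ⟨rfl, mem_AA.2 (Or.inl le_rfl)⟩⟩
  | coe v =>
    by_cases hv : v = 0
    · refine ⟨(0, 0), ⟨⟨le_rfl, by norm_num⟩, by norm_num, by norm_num⟩, ?_⟩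
      rw [Phi, if_neg (by simp)]
      simp [fin, RR, hv]
    · obtain ⟨X, hX, e⟩ := polar_surj v
      have hn : 0 < ‖v‖ := norm_pos_iff.2 hv
      obtain ⟨t, ρ, ht, hρ, hne, h1, h2⟩ := XR_surj (R := 2 * ‖v‖ / (1 + 2 * ‖v‖)) hX
        (by positivity) (by rw [div_lt_one (by positivity)]; linarith)
      refine ⟨(t, ρ), ⟨ht, hρ⟩, ?_⟩
      rw [Phi, if_neg hne]
      simp only [fin]
      rw [h1, h2]
      have : 2 * ‖v‖ / (1 + 2 * ‖v‖) / (1 - 2 * ‖v‖ / (1 + 2 * ‖v‖)) = 2 * ‖v‖ := by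
        field_simp
        ring
      rw [this, ← e]

lemma AA_zero : (0 : ℝ) ∈ AA := mem_AA.2 (Or.inl le_rfl)
lemma AA_four : (4 : ℝ) ∈ AA := mem_AA.2 (Or.inr (Or.inl le_rfl))

lemma gc04 : gc 0 = gc 4 := by
  rw [gc_bot le_rfl (by norm_num), gc_left (by norm_num) le_rfl]
  norm_num

/-- `Phi` factors through `pt`. -/
lemma Phi_of_pt {q q' : ℝ × ℝ} (hq : q ∈ KK) (hq' : q' ∈ KK) (e : pt q = pt q') :
    Phi q = Phi q' := by
  obtain ⟨t, ρ⟩ := q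
  obtain ⟨t', ρ'⟩ := q'
  have e' := add_left_cancel e
  obtain ⟨h1, h2⟩ := polar_inj hq.1 hq'.1 hq.2.1 hq'.2.1 e'
  simp only at h1 h2
  subst h1
  have key : Phi (0, ρ) = Phi (4, ρ) := by
    simp only [Phi, AA_zero, AA_four, fin, RR_of_mem, XX_of_mem, gc04]
  rcases h2 with h | h | ⟨h, h'⟩ | ⟨h, h'⟩
  · subst h
    simp [Phi, fin, RR]
  · rw [h]
  · rw [h, h', key]
  · rw [h, h', key]

lemma Phi_eq_cases {t ρ t' ρ' : ℝ} (hq : (t, ρ) ∈ KK) (hq' : (t', ρ') ∈ KK)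
    (e : Phi (t, ρ) = Phi (t', ρ')) :
    pt (t, ρ) = pt (t', ρ') ∨ (ρ = 1 ∧ ρ' = 1 ∧ ((t ∈ AA ∧ t' ∈ AA) ∨
      ∃ l r, Cons l r ∧ l < t ∧ t < r ∧ t' = l + r - t)) := by
  obtain ⟨ht, hρ0, hρ1⟩ := hq
  obtain ⟨ht', hρ0', hρ1'⟩ := hq'
  simp only at ht hρ0 hρ1 ht' hρ0' hρ1'
  simp only [Phi] at e
  by_cases h : ρ = 1 ∧ t ∈ AA
  · by_cases h' : ρ' = 1 ∧ t' ∈ AA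
    · exact Or.inr ⟨h.1, h'.1, Or.inl ⟨h.2, h'.2⟩⟩
    · rw [if_pos h, if_neg h'] at e
      exact absurd e (OnePoint.infty_ne_coe _)
  · by_cases h' : ρ' = 1 ∧ t' ∈ AA
    · rw [if_neg h, if_pos h'] at e
      exact absurd e (OnePoint.coe_ne_infty _)
    · rw [if_neg h, if_neg h', OnePoint.coe_eq_coe] at e
      simp only [fin] at e
      have l1 := RR_lt hρ0 hρ1 h
      have l2 := RR_lt hρ0' hρ1' h'
      obtain ⟨a, b⟩ := polar_inj (XX_Icc ht hρ1) (XX_Icc ht' hρ1')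
        (div_nonneg (RR_nonneg hρ0) (by linarith)) (div_nonneg (RR_nonneg hρ0') (by linarith)) e
      rw [div_eq_div_iff (by linarith) (by linarith)] at a
      have hRR : RR t ρ = RR t' ρ' := by linarith
      have ex : XX t ρ ∈ AA → XX t' ρ' ∈ AA → gc (XX t ρ) = gc (XX t' ρ') →
          pt (t, ρ) = pt (t', ρ') := by
        intro k1 k2 k3
        rw [XX_mem_AA hρ1] at k1
        rw [XX_mem_AA hρ1'] at k2
        rw [XX_of_mem k1, XX_of_mem k2] at k3
        rw [RR_of_mem k1, RR_of_mem k2] at hRR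
        simp only [pt]
        rw [k3, hRR]
      rcases eq_or_lt_of_le hρ0 with z | z
      · have z' : ρ' = 0 := by
          rw [← z] at hRR
          simp only [RR, zero_mul] at hRR
          rcases mul_eq_zero.1 hRR.symm with z' | z'
          · exact z'
          · linarith [dd_le t']
        left
        simp [pt, ← z, z']
      rcases eq_or_lt_of_le hρ0' with z' | z'
      · exfalso
        rw [← z'] at hRR
        simp only [RR, zero_mul] at hRR
        rcases mul_eq_zero.1 hRR with k | k
        · linarith
        · linarith [dd_le t]
      rcases b with b | b | ⟨b, b'⟩ | ⟨b, b'⟩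
      · have : 0 < RR t ρ := mul_pos z (by linarith [dd_le t])
        rcases div_eq_zero_iff.1 b with k | k <;> linarith
      · rcases XR_inj z hρ1 z' hρ1' b hRR with ⟨k1, k2⟩ | ⟨k1, k2, k3⟩
        · left; rw [k1, k2]
        · exact Or.inr ⟨k1, k2, Or.inr k3⟩
      · left
        exact ex (b ▸ AA_zero) (b' ▸ AA_four) (by rw [b, b', gc04])
      · left
        exact ex (b ▸ AA_four) (b' ▸ AA_zero) (by rw [b, b', gc04])

lemma Phi_AA {t t' : ℝ} (h : t ∈ AA) (h' : t' ∈ AA) : Phi (t, 1) = Phi (t', 1) := by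
  simp [Phi, h, h']

lemma Phi_fold {l r t : ℝ} (hc : Cons l r) (h1 : l ≤ t) (h2 : t ≤ r) :
    Phi (t, 1) = Phi (l + r - t, 1) := by
  rcases eq_or_lt_of_le h1 with e | h1
  · subst e
    rw [add_sub_cancel_left]
    exact Phi_AA hc.1 hc.2.1
  rcases eq_or_lt_of_le h2 with e | h2
  · subst e
    rw [add_sub_cancel_right]
    exact Phi_AA hc.2.1 hc.1
  have k1 : l < l + r - t := by linarith
  have k2 : l + r - t < r := by linarith
  have hd : dd t = dd (l + r - t) := by
    rw [dd_eq hc h1.le h2.le, dd_eq hc k1.le k2.le, ← abs_neg]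
    ring_nf
  have hX : XX t 1 = XX (l + r - t) 1 := by
    rw [XX_eq hc h1 h2 le_rfl, XX_eq hc k1 k2 le_rfl]; simp
  have n1 := hc.2.2.2 _ h1 h2
  have n2 := hc.2.2.2 _ k1 k2
  simp only [Phi, n1, n2, and_false, if_false, fin, RR, hd, hX]

lemma pw_pos (n : ℕ) : (0 : ℝ) < (1 / 2) ^ n := by positivity

lemma pw_le (n : ℕ) : ((1 / 2) ^ n : ℝ) ≤ 1 := pow_le_one₀ (by norm_num) (by norm_num)

lemma pw_succ (n : ℕ) : ((1 / 2) ^ n : ℝ) = 2 * (1 / 2) ^ (n + 1) := by rw [pow_succ]; ring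

lemma cons_bot (n : ℕ) : Cons ((1 / 2) ^ (n + 1)) ((1 / 2) ^ n) := by
  refine ⟨mem_AA.2 (Or.inr (Or.inr (Or.inr (Or.inl ⟨_, rfl⟩)))),
    mem_AA.2 (Or.inr (Or.inr (Or.inr (Or.inl ⟨_, rfl⟩)))), ?_, ?_⟩
  · have := pw_succ n
    have := pw_pos (n + 1)
    linarith
  · intro x h1 h2 hA
    have a := pw_pos (n + 1)
    have b := pw_le n
    rcases mem_AA.1 hA with h | h | h | ⟨i, h⟩ | ⟨i, h⟩
    · linarith
    · linarith
    · linarith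
    · rw [h] at h1 h2
      rw [pow_lt_pow_iff_right_of_lt_one₀ (by norm_num) (by norm_num)] at h1 h2
      omega
    · have := pw_le i
      linarith

lemma AA_symm {t : ℝ} (h : t ∈ AA) : 4 - t ∈ AA := by
  rw [mem_AA] at h ⊢
  rcases h with h | h | h | ⟨i, h⟩ | ⟨i, h⟩
  · right; left; linarith
  · left; linarith
  · right; right; left; linarith
  · right; right; right; right; exact ⟨i, by rw [h]⟩
  · right; right; right; left; exact ⟨i, by rw [h]; ring⟩

lemma Cons.symm {l r : ℝ} (h : Cons l r) : Cons (4 - r) (4 - l) := by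
  refine ⟨AA_symm h.2.1, AA_symm h.1, by linarith [h.2.2.1], fun x h1 h2 hA => ?_⟩
  exact h.2.2.2 (4 - x) (by linarith) (by linarith) (AA_symm hA)

lemma cons_right : Cons 1 2 := by
  refine ⟨mem_AA.2 (Or.inr (Or.inr (Or.inr (Or.inl ⟨0, by simp⟩)))),
    mem_AA.2 (Or.inr (Or.inr (Or.inl rfl))), by norm_num, ?_⟩
  intro x h1 h2 hA
  rcases mem_AA.1 hA with h | h | h | ⟨i, h⟩ | ⟨i, h⟩
  · linarith
  · linarith
  · linarith
  · have := pw_le i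
    linarith
  · have := pw_le i
    linarith

lemma cons_top : Cons 2 3 := by
  have := cons_right.symm
  norm_num at this
  exact this

lemma exists_pw {t : ℝ} (h0 : 0 < t) (h1 : t ≤ 1) (hA : t ∉ AA) :
    ∃ n : ℕ, (1 / 2 : ℝ) ^ (n + 1) < t ∧ t < (1 / 2) ^ n := by
  obtain ⟨n, a, b⟩ := exists_nat_pow_near_of_lt_one (y := (1 / 2 : ℝ)) h0 h1 (by norm_num)
    (by norm_num)
  refine ⟨n, a, lt_of_le_of_ne b (fun e => hA ?_)⟩
  exact mem_AA.2 (Or.inr (Or.inr (Or.inr (Or.inl ⟨_, e⟩))))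

lemma zpw (i : ℕ) : (2 : ℝ) ^ (-(i : ℤ)) = (1 / 2) ^ i := by
  rw [zpow_neg, zpow_natCast, one_div, inv_pow]

lemma zpw1 (n : ℕ) : (2 : ℝ) ^ (-((n + 1 : ℕ) : ℤ) + 1) = (1 / 2) ^ n := by
  rw [← zpw]
  congr 1
  push_cast
  ring

lemma pt_bot {t : ℝ} (h0 : 0 ≤ t) (h1 : t ≤ 1) : pt (t, 1) = (t, 0) := by
  simp only [pt]
  rw [gc_bot h0 h1]
  ext <;> simp

lemma pt_right {t : ℝ} (h0 : 1 ≤ t) (h1 : t ≤ 2) : pt (t, 1) = (1, t - 1) := by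
  simp only [pt]
  rw [gc_right h0 h1]
  ext <;> simp <;> ring

lemma pt_top {t : ℝ} (h0 : 2 ≤ t) (h1 : t ≤ 3) : pt (t, 1) = (3 - t, 1) := by
  simp only [pt]
  rw [gc_top h0 h1]
  ext <;> simp <;> ring

lemma pt_left {t : ℝ} (h0 : 3 ≤ t) (h1 : t ≤ 4) : pt (t, 1) = (0, 4 - t) := by
  simp only [pt]
  rw [gc_left h0 h1]
  ext <;> simp
  ring

lemma pt_Efold {t : ℝ} (ht : t ∈ Icc (0 : ℝ) 4) (hA : t ∈ AA) : pt (t, 1) ∈ Efold := by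
  obtain ⟨t0, t4⟩ := ht
  rcases mem_AA.1 hA with h | h | h | ⟨i, h⟩ | ⟨i, h⟩
  · have : t = 0 := le_antisymm h t0
    rw [this, pt_bot le_rfl (by norm_num)]
    left; left; simp
  · have : t = 4 := le_antisymm t4 h
    rw [this, pt_left (by norm_num) le_rfl]
    left; left; simp
  · rw [h, pt_right (by norm_num) le_rfl]
    left; left; right
    norm_num
  · rw [pt_bot t0 (by rw [h]; exact pw_le i)]
    right
    exact ⟨i, by rw [zpw, h]⟩
  · rw [pt_left (by rw [h]; linarith [pw_le i]) t4]
    left; right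
    exact ⟨i, by rw [zpw, h]; simp⟩

lemma Efold_pt {p : ℝ × ℝ} (h : p ∈ Efold) : ∃ t ∈ Icc (0 : ℝ) 4, t ∈ AA ∧ p = pt (t, 1) := by
  rcases h with ((h | h) | ⟨i, h⟩) | ⟨i, h⟩
  · exact ⟨0, ⟨le_rfl, by norm_num⟩, AA_zero, by rw [pt_bot le_rfl (by norm_num), h]⟩
  · refine ⟨2, ⟨by norm_num, by norm_num⟩, mem_AA.2 (Or.inr (Or.inr (Or.inl rfl))), ?_⟩
    rw [pt_right (by norm_num) le_rfl, h]
    norm_num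
  · have a := pw_pos i
    have b := pw_le i
    refine ⟨4 - (1 / 2) ^ i, ⟨by linarith, by linarith⟩,
      mem_AA.2 (Or.inr (Or.inr (Or.inr (Or.inr ⟨i, rfl⟩)))), ?_⟩
    rw [pt_left (by linarith) (by linarith), h, zpw]
    simp
  · have a := pw_pos i
    have b := pw_le i
    refine ⟨(1 / 2) ^ i, ⟨by linarith, by linarith⟩,
      mem_AA.2 (Or.inr (Or.inr (Or.inr (Or.inl ⟨i, rfl⟩)))), ?_⟩
    rw [pt_bot (by linarith) (by linarith), h, zpw]

lemma fold_baseRel {l r t : ℝ} (hc : Cons l r) (h1 : l < t) (h2 : t < r) :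
    baseRel (pt (t, 1)) (pt (l + r - t, 1)) := by
  have hb := hc.bounds
  have hA := hc.2.2.2 _ h1 h2
  have ne : ∀ s ∈ AA, t ≠ s := fun s hs e => hA (e ▸ hs)
  rcases four_cases (t := t) ⟨by linarith, by linarith⟩ with ⟨a, b⟩ | ⟨a, b⟩ | ⟨a, b⟩ | ⟨a, b⟩
  · obtain ⟨n, k1, k2⟩ := exists_pw (lt_of_le_of_ne a (ne 0 AA_zero).symm) b hA
    obtain ⟨e1, e2⟩ := hc.unique (cons_bot n) h1 h2 k1 k2
    have p1 := pw_succ n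
    have p2 := pw_le n
    have p3 := pw_pos (n + 1)
    right; right; right; left
    refine ⟨n + 1, by omega, t, ?_, pt_bot a b, ?_⟩
    · rw [zpw1, zpw]
      exact ⟨k1.le, k2.le⟩
    · rw [pt_bot (by linarith) (by linarith), zpw, e1, e2, p1]
      ext <;> simp
      ring
  · obtain ⟨e1, e2⟩ := hc.unique cons_right h1 h2
      (lt_of_le_of_ne a (ne 1 cons_right.1).symm) (lt_of_le_of_ne b (ne 2 cons_right.2.1))
    right; left
    refine ⟨t - 1, ⟨by linarith, by linarith⟩, pt_right a b, ?_⟩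
    rw [pt_right (by linarith) (by linarith), e1, e2]
    ext <;> simp
    ring
  · obtain ⟨e1, e2⟩ := hc.unique cons_top h1 h2
      (lt_of_le_of_ne a (ne 2 cons_top.1).symm) (lt_of_le_of_ne b (ne 3 cons_top.2.1))
    left
    refine ⟨3 - t, ⟨by linarith, by linarith⟩, pt_top a b, ?_⟩
    rw [pt_top (by linarith) (by linarith), e1, e2]
    ext <;> simp
    ring
  · have hA' : 4 - t ∉ AA := fun h => hA (by simpa using AA_symm h)
    have := lt_of_le_of_ne b (ne 4 AA_four)
    obtain ⟨n, k1, k2⟩ := exists_pw (t := 4 - t) (by linarith) (by linarith) hA'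
    obtain ⟨e1, e2⟩ := hc.unique (cons_bot n).symm h1 h2 (by linarith) (by linarith)
    have p1 := pw_succ n
    have p2 := pw_le n
    have p3 := pw_pos (n + 1)
    right; right; left
    refine ⟨n + 1, by omega, 4 - t, ?_, pt_left a b, ?_⟩
    · rw [zpw1, zpw]
      exact ⟨k1.le, k2.le⟩
    · rw [pt_left (by linarith) (by linarith), zpw, e1, e2, p1]
      ext <;> simp
      ring

lemma baseRel_Phi {p p' : ℝ × ℝ} (h : baseRel p p') :
    ∃ t ∈ Icc (0 : ℝ) 4, ∃ t' ∈ Icc (0 : ℝ) 4, p = pt (t, 1) ∧ p' = pt (t', 1) ∧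
      Phi (t, 1) = Phi (t', 1) := by
  rcases h with ⟨x, ⟨a, b⟩, e, e'⟩ | ⟨x, ⟨a, b⟩, e, e'⟩ | ⟨i, hi, x, ⟨a, b⟩, e, e'⟩ |
    ⟨i, hi, x, ⟨a, b⟩, e, e'⟩ | ⟨h, h'⟩
  · refine ⟨3 - x, ⟨by linarith, by linarith⟩, 2 + 3 - (3 - x), ⟨by linarith, by linarith⟩, ?_, ?_,
      Phi_fold cons_top (by linarith) (by linarith)⟩
    · rw [e, pt_top (by linarith) (by linarith)]; simp
    · rw [e', pt_top (by linarith) (by linarith)]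
      ext <;> simp
      ring
  · refine ⟨1 + x, ⟨by linarith, by linarith⟩, 1 + 2 - (1 + x), ⟨by linarith, by linarith⟩, ?_, ?_,
      Phi_fold cons_right (by linarith) (by linarith)⟩
    · rw [e, pt_right (by linarith) (by linarith)]; simp
    · rw [e', pt_right (by linarith) (by linarith)]
      ext <;> simp
      ring
  · obtain ⟨n, rfl⟩ := Nat.exists_eq_add_of_le' hi
    rw [zpw1] at b
    rw [zpw] at a e'
    have p1 := pw_succ n
    have p2 := pw_le n
    have p3 := pw_pos (n + 1)
    refine ⟨4 - x, ⟨by linarith, by linarith⟩,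
      4 - (1 / 2) ^ n + (4 - (1 / 2) ^ (n + 1)) - (4 - x), ⟨by linarith, by linarith⟩, ?_, ?_,
      Phi_fold (cons_bot n).symm (by linarith) (by linarith)⟩
    · rw [e, pt_left (by linarith) (by linarith)]; simp
    · rw [e', pt_left (by linarith) (by linarith)]
      rw [p1]
      ext <;> simp
      ring
  · obtain ⟨n, rfl⟩ := Nat.exists_eq_add_of_le' hi
    rw [zpw1] at b
    rw [zpw] at a e'
    have p1 := pw_succ n
    have p2 := pw_le n
    have p3 := pw_pos (n + 1)
    refine ⟨x, ⟨by linarith, by linarith⟩,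
      (1 / 2) ^ (n + 1) + (1 / 2) ^ n - x, ⟨by linarith, by linarith⟩, ?_, ?_,
      Phi_fold (cons_bot n) (by linarith) (by linarith)⟩
    · rw [e, pt_bot (by linarith) (by linarith)]
    · rw [e', pt_bot (by linarith) (by linarith)]
      rw [p1]
      ext <;> simp
      ring
  · obtain ⟨t, ht, hA, e⟩ := Efold_pt h
    obtain ⟨t', ht', hA', e'⟩ := Efold_pt h'
    exact ⟨t, ht, t', ht', e, e', Phi_AA hA hA'⟩

open Classical in
/-- The map induced by `Phi` on the square (with junk outside). -/
def Psi (p : ℝ × ℝ) : OnePoint (ℝ × ℝ) :=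
  if h : ∃ q ∈ KK, pt q = p then Phi h.choose else OnePoint.infty

lemma Psi_pt {q : ℝ × ℝ} (hq : q ∈ KK) : Psi (pt q) = Phi q := by
  have h : ∃ q' ∈ KK, pt q' = pt q := ⟨q, hq, rfl⟩
  rw [Psi, dif_pos h]
  exact Phi_of_pt h.choose_spec.1 hq h.choose_spec.2

lemma hsRel_Psi {p p' : ℝ × ℝ} (h : hsRel p p') : Psi p = Psi p' := by
  induction h with
  | rel x y h =>
    obtain ⟨t, ht, t', ht', e, e', hP⟩ := baseRel_Phi h
    rw [e, e', Psi_pt ⟨ht, by norm_num, le_rfl⟩, Psi_pt ⟨ht', by norm_num, le_rfl⟩, hP]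
  | refl x => rfl
  | symm x y _ ih => exact ih.symm
  | trans x y z _ _ ih1 ih2 => exact ih1.trans ih2

lemma hsRel_iff {q q' : ℝ × ℝ} (hq : q ∈ KK) (hq' : q' ∈ KK) :
    hsRel (pt q) (pt q') ↔ Phi q = Phi q' := by
  constructor
  · intro h
    rw [← Psi_pt hq, ← Psi_pt hq']
    exact hsRel_Psi h
  · intro h
    obtain ⟨t, ρ⟩ := q
    obtain ⟨t', ρ'⟩ := q'
    rcases Phi_eq_cases hq hq' h with e | ⟨e1, e2, ⟨h1, h2⟩ | ⟨l, r, hc, h1, h2, e⟩⟩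
    · rw [e]; exact Relation.EqvGen.refl _
    · subst e1 e2
      exact Relation.EqvGen.rel _ _
        (Or.inr (Or.inr (Or.inr (Or.inr ⟨pt_Efold hq.1 h1, pt_Efold hq'.1 h2⟩))))
    · subst e1 e2 e
      exact Relation.EqvGen.rel _ _ (fold_baseRel hc h1 h2)

lemma main : Nonempty (HS ≃ₜ OnePoint (ℝ × ℝ)) := by
  have : CompactSpace KK :=
    isCompact_iff_compactSpace.1 (isCompact_Icc.prod isCompact_Icc)
  let f : C(KK, OnePoint (ℝ × ℝ)) := ⟨fun q => Phi q.1, Phi_cont.restrict⟩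
  let π : KK → Sq := fun q => ⟨pt q.1, pt_mem q.2⟩
  have hπ : Continuous π := (pt_cont.comp continuous_subtype_val).subtype_mk _
  have hπs : Function.Surjective π := by
    rintro ⟨p, hp⟩
    obtain ⟨q, hq, e⟩ := pt_surj hp
    exact ⟨⟨q, hq⟩, Subtype.ext e⟩
  have hfs : Function.Surjective f := by
    intro z
    obtain ⟨q, hq, e⟩ := Phi_surj z
    exact ⟨⟨q, hq⟩, e⟩
  let g : C(KK, HS) := ⟨fun q => hsPi (π q), continuous_quotient_mk'.comp hπ⟩
  have hf : IsQuotientMap f := f.continuous.isClosedMap.isQuotientMap f.continuous hfs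
  have hg : IsQuotientMap g :=
    (isQuotientMap_quotient_mk' (s := hsSetoid)).comp
      (hπ.isClosedMap.isQuotientMap hπ hπs)
  have hker : Setoid.ker g = Setoid.ker f := by
    ext a b
    rw [Setoid.ker_def, Setoid.ker_def]
    have : g a = g b ↔ hsRel (pt a.1) (pt b.1) := Quotient.eq (r := hsSetoid)
    rw [this]
    exact hsRel_iff a.2 b.2
  have e1 := hg.homeomorph
  rw [hker] at e1
  exact ⟨e1.symm.trans hf.homeomorph⟩

end

end HSProof

/-- The quotient space `S = Σ/∼` is homeomorphic to the 2-sphere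
(the unit sphere in 3-dimensional Euclidean space). -/
theorem HS_homeomorphic_to_sphere :
    Nonempty (HS ≃ₜ Metric.sphere (0 : EuclideanSpace ℝ (Fin 3)) 1) := by
  obtain ⟨e⟩ := HSProof.main
  exact ⟨e.trans (onePointEquivSphereOfFinrankEq (ι := Fin 3) (V := ℝ × ℝ) (by simp))⟩
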